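/- Let n ≥ 2 be an integer and let G be the grid P_n □ P_3. If j is an integer such that 2 ≤ j ≤ n−1, then 3j ∈ S_SC(G). -/

import Mathlib

/-!  Common definitions: oriented graphs, geodesic convexity, convexity number,
strong convexity spectrum, and grid graphs. -/

variable {V : Type*}

/-- A directed walk of length `k` from `u` to `v` along the arc relation `A`,
encoded by the function `f` listing its vertices. -/
def IsDirWalk (A : V → V → Prop) (k : ℕ) (f : ℕ → V) (u v : V) : Prop :=
  f 0 = u ∧ f k = v ∧ ∀ i, i < k → A (f i) (f (i + 1))

/-- There is a directed walk from `u` to `v`. -/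
def DirReachable (A : V → V → Prop) (u v : V) : Prop :=
  ∃ k f, IsDirWalk A k f u v

/-- A digraph (given by its arc relation) is strongly connected. -/
def StrongConnected (A : V → V → Prop) : Prop :=
  ∀ u v : V, DirReachable A u v

/-- A `uv`-geodesic: a directed walk from `u` to `v` of minimum possible length
(such a walk is automatically a directed path). -/
def IsGeodesic (A : V → V → Prop) (k : ℕ) (f : ℕ → V) (u v : V) : Prop :=
  IsDirWalk A k f u v ∧ ∀ k' f', IsDirWalk A k' f' u v → k ≤ k'

/-- A nonempty vertex set `C` is convex if every vertex lying on a geodesic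
between two vertices of `C` (in either direction) belongs to `C`. -/
def DConvex (A : V → V → Prop) (C : Set V) : Prop :=
  C.Nonempty ∧ ∀ u ∈ C, ∀ v ∈ C, ∀ k f, IsGeodesic A k f u v → ∀ i ≤ k, f i ∈ C

/-- `A` is an orientation of the simple graph `G`: every arc is along an edge,
every edge gets an arc, and no edge gets both directions. -/
def IsOrientation (G : SimpleGraph V) (A : V → V → Prop) : Prop :=
  (∀ x y, A x y → G.Adj x y) ∧ (∀ x y, G.Adj x y → A x y ∨ A y x) ∧
    (∀ x y, A x y → ¬ A y x)

/-- The convexity number of a digraph: the maximum cardinality of a proper convex set. -/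
noncomputable def convexityNumber [Fintype V] (A : V → V → Prop) : ℕ :=
  sSup {k | ∃ C : Set V, DConvex A C ∧ C ≠ Set.univ ∧ C.ncard = k}

/-- The strong convexity spectrum of a graph: the set of convexity numbers of
its strongly connected orientations. -/
def strongConvexitySpectrum [Fintype V] (G : SimpleGraph V) : Set ℕ :=
  {k | ∃ A : V → V → Prop, IsOrientation G A ∧ StrongConnected A ∧ convexityNumber A = k}

/-- The grid graph `P_n □ P_m`. -/
def gridGraph (n m : ℕ) : SimpleGraph (Fin n × Fin m) :=
  (SimpleGraph.pathGraph n).boxProd (SimpleGraph.pathGraph m)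

/-!
We orient the grid so that the first `j` columns are a convex set of maximum cardinality.

They are convex because every directed walk that leaves them and comes back can be replaced by a
strictly shorter one. Conversely, in a triangle-free graph a convex set that contains two vertices
of a directed four-cycle contains all of it, so convex sets spread over edge-sharing unit squares
that are directed cycles. A nontrivial convex set with a vertex outside the first `j` columns is
carried in this way, and by short geodesics, to the whole grid.

If only one column is left after the first `j`, it contains no unit square, so the cases `j + 1 = n`
and `j + 2 ≤ n` need different orientations.
-/

section Walks

variable {A : V → V → Prop} {u v w : V} {k l : ℕ} {f g : ℕ → V}

theorem IsDirWalk.cons (h : A u v) (hf : IsDirWalk A k f v w) :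
    IsDirWalk A (k + 1) (fun | 0 => u | t + 1 => f t) u w := by
  refine ⟨rfl, hf.2.1, fun t ht => ?_⟩
  cases t with
  | zero =>
    change A u (f 0)
    rwa [hf.1]
  | succ t => exact hf.2.2 t (by omega)

theorem IsDirWalk.tail (hf : IsDirWalk A (k + 1) f u v) :
    IsDirWalk A k (fun t => f (t + 1)) (f 1) v :=
  ⟨rfl, hf.2.1, fun t ht => hf.2.2 (t + 1) (by omega)⟩

theorem IsDirWalk.exists_append (hf : IsDirWalk A k f u v) (hg : IsDirWalk A l g v w) :
    ∃ h, IsDirWalk A (k + l) h u w ∧ h k = v := by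
  induction k generalizing f u with
  | zero =>
    obtain rfl : u = v := hf.1.symm.trans hf.2.1
    exact ⟨g, by rwa [Nat.zero_add], hg.1⟩
  | succ k ih =>
    obtain ⟨h, hh, hk⟩ := ih hf.tail
    have huf : A u (f 1) := hf.1 ▸ hf.2.2 0 (by omega)
    exact ⟨_, by rw [Nat.add_right_comm]; exact hh.cons huf, hk⟩

/-- There is a directed walk of length exactly `k` from `u` to `v`. -/
def HasDirWalk (A : V → V → Prop) (k : ℕ) (u v : V) : Prop :=
  ∃ f, IsDirWalk A k f u v

theorem hasDirWalk_zero : HasDirWalk A 0 u v ↔ u = v :=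
  ⟨fun ⟨_, hf⟩ => hf.1.symm.trans hf.2.1, fun h => ⟨fun _ => u, rfl, h, by simp⟩⟩

theorem hasDirWalk_succ : HasDirWalk A (k + 1) u w ↔ ∃ v, A u v ∧ HasDirWalk A k v w := by
  constructor
  · rintro ⟨f, hf⟩
    exact ⟨f 1, hf.1 ▸ hf.2.2 0 (by omega), _, hf.tail⟩
  · rintro ⟨v, h, f, hf⟩
    exact ⟨_, hf.cons h⟩

theorem hasDirWalk_one : HasDirWalk A 1 u v ↔ A u v := by
  simp only [hasDirWalk_succ, hasDirWalk_zero, exists_eq_right]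

theorem HasDirWalk.cons (h : A u v) (hw : HasDirWalk A k v w) : HasDirWalk A (k + 1) u w :=
  hasDirWalk_succ.2 ⟨v, h, hw⟩

theorem HasDirWalk.append (h : HasDirWalk A k u v) (h' : HasDirWalk A l v w) :
    HasDirWalk A (k + l) u w := by
  obtain ⟨f, hf⟩ := h
  obtain ⟨g, hg⟩ := h'
  exact (hf.exists_append hg).imp fun _ => And.left

theorem IsDirWalk.hasDirWalk_take (hf : IsDirWalk A k f u v) {i : ℕ} (hi : i ≤ k) :
    HasDirWalk A i u (f i) :=
  ⟨f, hf.1, rfl, fun t ht => hf.2.2 t (by omega)⟩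

theorem IsDirWalk.hasDirWalk_drop (hf : IsDirWalk A k f u v) {i : ℕ} (hi : i ≤ k) :
    HasDirWalk A (k - i) (f i) v :=
  ⟨fun t => f (i + t), rfl, by simpa only [Nat.add_sub_cancel' hi] using hf.2.1,
    fun t ht => hf.2.2 (i + t) (by omega)⟩

theorem HasDirWalk.exists_crossing {S : Set V} (h : HasDirWalk A k u v) (hu : u ∉ S)
    (hv : v ∈ S) : ∃ i l x y, i + 1 + l = k ∧ x ∉ S ∧ y ∈ S ∧
      HasDirWalk A i u x ∧ A x y ∧ HasDirWalk A l y v := by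
  induction k generalizing u with
  | zero => exact absurd (hasDirWalk_zero.1 h ▸ hv) hu
  | succ k ih =>
    obtain ⟨w, huw, hw⟩ := hasDirWalk_succ.1 h
    by_cases hwS : w ∈ S
    · exact ⟨0, k, u, w, by omega, hu, hwS, hasDirWalk_zero.2 rfl, huw, hw⟩
    · obtain ⟨i, l, x, y, hk, hx, hy, hwx, hxy, hyv⟩ := ih hw hwS
      exact ⟨i + 1, l, x, y, by omega, hx, hy, hwx.cons huw, hxy, hyv⟩

theorem StrongConnected.exists_isGeodesic (hA : StrongConnected A) (u v : V) :
    ∃ k f, IsGeodesic A k f u v := by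
  classical
  have h : ∃ k, HasDirWalk A k u v := hA u v
  obtain ⟨f, hf⟩ := Nat.find_spec h
  exact ⟨Nat.find h, f, hf, fun k' f' hf' => Nat.find_min' h ⟨f', hf'⟩⟩

theorem dirReachable_of_reflTransGen (h : Relation.ReflTransGen A u v) : DirReachable A u v := by
  induction h using Relation.ReflTransGen.head_induction_on with
  | refl => exact ⟨0, hasDirWalk_zero.2 rfl⟩
  | head h _ ih =>
    obtain ⟨k, hw⟩ := ih
    exact ⟨k + 1, HasDirWalk.cons h hw⟩

/-- `u` and `v` lie in the same strong component. -/
abbrev MutuallyReachable (A : V → V → Prop) : V → V → Prop :=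
  AntisymmRel (Relation.ReflTransGen A)

theorem MutuallyReachable.of_between {x : V} (h : MutuallyReachable A u v)
    (hux : Relation.ReflTransGen A u x) (hxv : Relation.ReflTransGen A x v) :
    MutuallyReachable A u x :=
  ⟨hux, hxv.trans h.2⟩

theorem strongConnected_of_mutuallyReachable (h : ∀ x, MutuallyReachable A u x) :
    StrongConnected A :=
  fun x y => dirReachable_of_reflTransGen ((h x).2.trans (h y).1)

end Walks

section Convexity

variable {A : V → V → Prop} {S : Set V} {a b c : V}

theorem DConvex.mem_of_forall_not_hasDirWalk {k l : ℕ} (hS : DConvex A S) (ha : a ∈ S)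
    (hc : c ∈ S) (hab : HasDirWalk A k a b) (hbc : HasDirWalk A l b c)
    (hmin : ∀ i < k + l, ¬ HasDirWalk A i a c) : b ∈ S := by
  obtain ⟨f, hf⟩ := hab
  obtain ⟨g, hg⟩ := hbc
  obtain ⟨h, hh, rfl⟩ := hf.exists_append hg
  exact hS.2 a ha c hc (k + l) h
    ⟨hh, fun i f' hf' => not_lt.1 fun hi => hmin i hi ⟨f', hf'⟩⟩ k (by omega)

theorem DConvex.exists_arc_from (hS : DConvex A S) (hA : StrongConnected A) (hnt : S.Nontrivial)
    (ha : a ∈ S) : ∃ b ∈ S, A a b := by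
  obtain ⟨c, hc, hca⟩ := hnt.exists_ne a
  obtain ⟨k, f, hf⟩ := hA.exists_isGeodesic a c
  have hk : 0 < k := Nat.pos_of_ne_zero fun h => hca <| by
    subst h
    exact hf.1.2.1.symm.trans hf.1.1
  exact ⟨f 1, hS.2 a ha c hc k f hf 1 hk, hf.1.1 ▸ hf.1.2.2 0 hk⟩

theorem DConvex.exists_arc_to (hS : DConvex A S) (hA : StrongConnected A) (hnt : S.Nontrivial)
    (ha : a ∈ S) : ∃ b ∈ S, A b a := by
  obtain ⟨c, hc, hca⟩ := hnt.exists_ne a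
  obtain ⟨k, f, hf⟩ := hA.exists_isGeodesic c a
  cases k with
  | zero => exact absurd (hf.1.1.symm.trans hf.1.2.1) hca
  | succ k => exact ⟨f k, hS.2 c hc a ha _ f hf k (by omega), hf.1.2.1 ▸ hf.1.2.2 k (by omega)⟩

/-- A geodesic leaving `S` contains an excursion `x → y ⇝ z → w` whose middle part starts and ends
outside `S`; a shortcut from `x` to `w` contradicts its minimality. -/
theorem dConvex_of_shortcut (hne : S.Nonempty)
    (h : ∀ x ∈ S, ∀ w ∈ S, ∀ y ∉ S, ∀ z ∉ S, A x y → A z w → ∀ l, HasDirWalk A l y z →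
      ∃ k < l + 2, HasDirWalk A k x w) : DConvex A S := by
  refine ⟨hne, fun u hu v hv k f hf i hi => ?_⟩
  by_contra hfi
  obtain ⟨i₁, l₁, x, y, hi₁, hx, hy, hux, hxy, hyf⟩ :=
    (hf.1.hasDirWalk_take hi).exists_crossing (S := Sᶜ) (not_not.2 hu) hfi
  obtain ⟨i₂, l₂, z, w, hi₂, hz, hw, hfz, hzw, hwv⟩ :=
    (hf.1.hasDirWalk_drop hi).exists_crossing hfi hv
  obtain ⟨m, hm, hxw⟩ := h x (not_not.1 hx) w hw y hy z hz hxy hzw _ (hyf.append hfz)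
  obtain ⟨g, hg⟩ := (hux.append hxw).append hwv
  have := hf.2 _ g hg
  omega

theorem convexityNumber_eq_ncard [Fintype V] (hS : DConvex A S) (hne : S ≠ Set.univ)
    (hmax : ∀ T, DConvex A T → T.Nontrivial → ¬ T ⊆ S → T = Set.univ) :
    convexityNumber A = S.ncard := by
  refine IsGreatest.csSup_eq ⟨⟨S, hS, hne, rfl⟩, ?_⟩
  rintro _ ⟨T, hT, hTne, rfl⟩
  by_contra! hlt
  have hpos : 0 < S.ncard := hS.1.ncard_pos
  have hnt : T.Nontrivial := Set.one_lt_ncard_iff_nontrivial.1 (by omega)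
  exact hTne (hmax T hT hnt fun hTS => (Set.ncard_le_ncard hTS).not_gt hlt)

end Convexity

section TriangleFree

variable {G : SimpleGraph V} {A : V → V → Prop} {S : Set V} {a b c d : V}

theorem IsOrientation.not_adj_of_arc_of_arc (hA : IsOrientation G A) (hG : G.CliqueFree 3)
    (hab : A a b) (hbc : A b c) : ¬ G.Adj a c := by
  classical
  exact fun hac =>
    hG {a, b, c} (SimpleGraph.is3Clique_triple_iff.2 ⟨hA.1 a b hab, hac, hA.1 b c hbc⟩)

theorem DConvex.mem_of_arc_of_arc (hS : DConvex A S) (hA : IsOrientation G A)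
    (hG : G.CliqueFree 3) (hab : A a b) (hbc : A b c) (ha : a ∈ S) (hc : c ∈ S) : b ∈ S := by
  refine hS.mem_of_forall_not_hasDirWalk ha hc (hasDirWalk_one.2 hab) (hasDirWalk_one.2 hbc) ?_
  intro i hi
  interval_cases i
  · rw [hasDirWalk_zero]
    rintro rfl
    exact hA.2.2 a b hab hbc
  · rw [hasDirWalk_one]
    exact fun hac => hA.not_adj_of_arc_of_arc hG hab hbc (hA.1 a c hac)

/-- `a → b → c → d → a` is a directed four-cycle in one of its two directions of traversal. -/
def IsCyclicSquare (A : V → V → Prop) (a b c d : V) : Prop :=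
  (A a b ∧ A b c ∧ A c d ∧ A d a) ∨ (A b a ∧ A c b ∧ A d c ∧ A a d)

theorem IsCyclicSquare.rotate (h : IsCyclicSquare A a b c d) : IsCyclicSquare A b c d a := by
  unfold IsCyclicSquare at h ⊢
  tauto

theorem IsCyclicSquare.mutuallyReachable (h : IsCyclicSquare A a b c d) :
    MutuallyReachable A a b := by
  rcases h with ⟨hab, hbc, hcd, hda⟩ | ⟨hba, hcb, hdc, had⟩
  · exact ⟨.single hab, ((Relation.ReflTransGen.single hbc).tail hcd).tail hda⟩
  · exact ⟨((Relation.ReflTransGen.single had).tail hdc).tail hcb, .single hba⟩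

theorem IsCyclicSquare.mutuallyReachable_of_mem {x y : V} (h : IsCyclicSquare A a b c d)
    (hx : x ∈ ({a, b, c, d} : Set V)) (hy : y ∈ ({a, b, c, d} : Set V)) :
    MutuallyReachable A x y := by
  have hab := h.mutuallyReachable
  have hac := hab.trans h.rotate.mutuallyReachable
  have had := h.rotate.rotate.rotate.mutuallyReachable.symm
  have from_a : ∀ z ∈ ({a, b, c, d} : Set V), MutuallyReachable A a z := by
    rintro z (rfl | rfl | rfl | rfl)
    exacts [.rfl, hab, hac, had]
  exact (from_a x hx).symm.trans (from_a y hy)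

theorem DConvex.mem_of_directed_four_cycle (hS : DConvex A S) (hA : IsOrientation G A)
    (hG : G.CliqueFree 3) (hab : A a b) (hbc : A b c) (hcd : A c d) (hda : A d a)
    (ha : a ∈ S) (hb : b ∈ S) : c ∈ S ∧ d ∈ S := by
  have hmin : ∀ i < 3, ¬ HasDirWalk A i b a := by
    intro i hi
    interval_cases i
    · rw [hasDirWalk_zero]
      rintro rfl
      exact hA.2.2 b b hab hab
    · rw [hasDirWalk_one]
      exact hA.2.2 a b hab
    · rw [hasDirWalk_succ]
      rintro ⟨w, hbw, hwa⟩
      exact hA.not_adj_of_arc_of_arc hG hbw (hasDirWalk_one.1 hwa) (hA.1 a b hab).symm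
  have hc : c ∈ S := hS.mem_of_forall_not_hasDirWalk hb ha (hasDirWalk_one.2 hbc)
    (.cons hcd (hasDirWalk_one.2 hda)) hmin
  exact ⟨hc, hS.mem_of_arc_of_arc hA hG hcd hda hc ha⟩

theorem DConvex.mem_of_isCyclicSquare (hS : DConvex A S) (hA : IsOrientation G A)
    (hG : G.CliqueFree 3) (h : IsCyclicSquare A a b c d) (ha : a ∈ S) (hb : b ∈ S) :
    c ∈ S ∧ d ∈ S := by
  rcases h with ⟨hab, hbc, hcd, hda⟩ | ⟨hba, hcb, hdc, had⟩
  · exact hS.mem_of_directed_four_cycle hA hG hab hbc hcd hda ha hb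
  · exact (hS.mem_of_directed_four_cycle hA hG hba had hdc hcb hb ha).symm

theorem DConvex.mem_of_isCyclicSquare_opposite (hS : DConvex A S) (hA : IsOrientation G A)
    (hG : G.CliqueFree 3) (h : IsCyclicSquare A a b c d) (ha : a ∈ S) (hc : c ∈ S) : b ∈ S := by
  rcases h with ⟨hab, hbc, -⟩ | ⟨hba, hcb, -⟩
  · exact hS.mem_of_arc_of_arc hA hG hab hbc ha hc
  · exact hS.mem_of_arc_of_arc hA hG hcb hba hc ha

theorem DConvex.subset_of_isCyclicSquare (hS : DConvex A S) (hA : IsOrientation G A)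
    (hG : G.CliqueFree 3) (h : IsCyclicSquare A a b c d)
    (hnt : (S ∩ {a, b, c, d}).Nontrivial) : {a, b, c, d} ⊆ S := by
  obtain ⟨x, ⟨hxS, hx⟩, y, ⟨hyS, hy⟩, hxy⟩ := hnt
  have hab := hS.mem_of_isCyclicSquare hA hG h
  have hbc := hS.mem_of_isCyclicSquare hA hG h.rotate
  have hcd := hS.mem_of_isCyclicSquare hA hG h.rotate.rotate
  have hda := hS.mem_of_isCyclicSquare hA hG h.rotate.rotate.rotate
  have hac := hS.mem_of_isCyclicSquare_opposite hA hG h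
  have hbd := hS.mem_of_isCyclicSquare_opposite hA hG h.rotate
  simp only [Set.insert_subset_iff, Set.singleton_subset_iff]
  simp only [Set.mem_insert_iff, Set.mem_singleton_iff] at hx hy
  grind

end TriangleFree

section Grid

variable {n m a b k i c i' c' j : ℕ} {x y : Fin n × Fin m}

theorem gridGraph_adj : (gridGraph n m).Adj x y ↔
    (x.1 : ℕ) = y.1 ∧ ((x.2 : ℕ) + 1 = y.2 ∨ (y.2 : ℕ) + 1 = x.2) ∨
      (x.2 : ℕ) = y.2 ∧ ((x.1 : ℕ) + 1 = y.1 ∨ (y.1 : ℕ) + 1 = x.1) := by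
  rw [gridGraph, SimpleGraph.boxProd_adj, SimpleGraph.pathGraph_adj, SimpleGraph.pathGraph_adj,
    Fin.ext_iff, Fin.ext_iff]
  omega

theorem gridGraph_cliqueFree_three : (gridGraph n m).CliqueFree 3 := by
  rintro s hs
  obtain ⟨x, y, z, hxy, hxz, hyz, -⟩ := SimpleGraph.is3Clique_iff.1 hs
  rw [gridGraph_adj] at hxy hxz hyz
  omega

theorem exists_grid_coordinates (n m i c : ℕ) (hi : i < n := by omega) (hc : c < m := by omega) :
    ∃ x : Fin n × Fin m, (x.1 : ℕ) = i ∧ (x.2 : ℕ) = c :=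
  ⟨(⟨i, hi⟩, ⟨c, hc⟩), rfl, rfl⟩

/-- The vertices of `P_n □ P_m` in columns `a, …, b - 1` and rows `0, …, k - 1`. -/
def gridBlock (n m a b k : ℕ) : Set (Fin n × Fin m) :=
  {x | (a ≤ x.1 ∧ x.1 < b) ∧ x.2 < k}

theorem mem_gridBlock :
    x ∈ gridBlock n m a b k ↔ (a ≤ (x.1 : ℕ) ∧ (x.1 : ℕ) < b) ∧ (x.2 : ℕ) < k :=
  Iff.rfl

/-- The first `j` columns of `P_n □ P_m`, which are to become a convex set of maximum
cardinality. -/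
def leftColumns (n m j : ℕ) : Set (Fin n × Fin m) :=
  gridBlock n m 0 j m

theorem mem_leftColumns : x ∈ leftColumns n m j ↔ (x.1 : ℕ) < j :=
  ⟨fun h => h.1.2, fun h => ⟨⟨Nat.zero_le _, h⟩, x.2.2⟩⟩

theorem ncard_leftColumns (hj : j ≤ n) : (leftColumns n m j).ncard = m * j := by
  have h : leftColumns n m j =
      ↑((Finset.univ.filter fun t : Fin n => (t : ℕ) < j) ×ˢ (Finset.univ : Finset (Fin m))) := by
    ext x
    simp [mem_leftColumns]
  rw [h, Set.ncard_coe_finset, Finset.card_product, Fin.card_filter_val_lt, min_eq_right hj,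
    Finset.card_univ, Fintype.card_fin, mul_comm]

theorem mul_mem_strongConvexitySpectrum_gridGraph {A : Fin n × Fin m → Fin n × Fin m → Prop}
    (hA : IsOrientation (gridGraph n m) A) (hstrong : StrongConnected A) (hm : 0 < m)
    (hj : j < n) (hleft : DConvex A (leftColumns n m j))
    (hmax : ∀ S, DConvex A S → S.Nontrivial → ¬ S ⊆ leftColumns n m j → S = Set.univ) :
    m * j ∈ strongConvexitySpectrum (gridGraph n m) := by
  have hne : leftColumns n m j ≠ Set.univ := fun h =>
    lt_irrefl j (mem_leftColumns.1 (h ▸ Set.mem_univ ((⟨j, hj⟩, ⟨0, hm⟩) : Fin n × Fin m)))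
  exact ⟨A, hA, hstrong, (convexityNumber_eq_ncard hleft hne hmax).trans (ncard_leftColumns hj.le)⟩

/-- The vertex of `P_n □ P_m` with zero-based coordinates `i` and `c`, which are reduced modulo
`n` and `m` so that no proof of `i < n` and `c < m` has to be supplied. -/
def gridVertex (n m i c : ℕ) [NeZero n] [NeZero m] : Fin n × Fin m :=
  (Fin.ofNat n i, Fin.ofNat m c)

section Vertex

variable [NeZero n] [NeZero m]

theorem gridVertex_fst (hi : i < n) : ((gridVertex n m i c).1 : ℕ) = i :=
  Nat.mod_eq_of_lt hi

theorem gridVertex_snd (hc : c < m) : ((gridVertex n m i c).2 : ℕ) = c :=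
  Nat.mod_eq_of_lt hc

theorem eq_gridVertex (hi : (x.1 : ℕ) = i) (hc : (x.2 : ℕ) = c) : x = gridVertex n m i c := by
  subst hi hc
  exact Prod.ext (Fin.ext (gridVertex_fst x.1.2).symm) (Fin.ext (gridVertex_snd x.2.2).symm)

end Vertex

theorem of_grid_steps {P : ℕ → ℕ → Prop}
    (hrow : ∀ i, a ≤ i → i + 1 < b → (P i 0 ↔ P (i + 1) 0))
    (hcol : ∀ i c, a ≤ i → i < b → c + 1 < k → (P i c ↔ P i (c + 1)))
    (hi : a ≤ i ∧ i < b) (hc : c < k) (h : P i c) (hi' : a ≤ i' ∧ i' < b) (hc' : c' < k) :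
    P i' c' := by
  have to_top : ∀ i c, a ≤ i → i < b → c < k → (P i c ↔ P i 0) := by
    intro i c hai hib hck
    induction c with
    | zero => rfl
    | succ c ih => rw [← hcol i c hai hib hck, ih (by omega)]
  have to_left : ∀ i, a ≤ i → i < b → (P i 0 ↔ P a 0) := by
    intro i hai hib
    induction i, hai using Nat.le_induction with
    | base => rfl
    | succ i hai ih => rw [← hrow i hai hib, ih (by omega)]
  rw [to_top i c hi.1 hi.2 hc, to_left i hi.1 hi.2] at h
  rw [to_top i' c' hi'.1 hi'.2 hc', to_left i' hi'.1 hi'.2]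
  exact h

/-- The corners of the unit square of `P_n □ P_m` between columns `i`, `i + 1` and rows
`c`, `c + 1`. -/
def gridFace (n m i c : ℕ) : Set (Fin n × Fin m) :=
  {x | (x.1 = i ∨ x.1 = i + 1) ∧ (x.2 = c ∨ x.2 = c + 1)}

theorem mem_gridFace : x ∈ gridFace n m i c ↔
    ((x.1 : ℕ) = i ∨ (x.1 : ℕ) = i + 1) ∧ ((x.2 : ℕ) = c ∨ (x.2 : ℕ) = c + 1) :=
  Iff.rfl

theorem exists_gridFace (hx : x ∈ gridBlock n m a b k) (hy : y ∈ gridBlock n m a b k)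
    (hab : a + 2 ≤ b) (hk : 2 ≤ k) (hxy : x = y ∨ (gridGraph n m).Adj x y) :
    ∃ i c, a ≤ i ∧ i + 1 < b ∧ c + 1 < k ∧ x ∈ gridFace n m i c ∧ y ∈ gridFace n m i c := by
  simp only [mem_gridBlock, mem_gridFace, gridGraph_adj] at *
  refine ⟨min (min (x.1 : ℕ) y.1) (b - 2), min (min (x.2 : ℕ) y.2) (k - 2), ?_⟩
  rcases hxy with rfl | hxy <;> omega

theorem gridFace_inter_right_nontrivial (hi : i + 1 < n) (hc : c + 1 < m) :
    (gridFace n m i c ∩ gridFace n m (i + 1) c).Nontrivial :=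
  ⟨(⟨i + 1, hi⟩, ⟨c, by omega⟩), by simp [mem_gridFace],
    (⟨i + 1, hi⟩, ⟨c + 1, hc⟩), by simp [mem_gridFace], by simp⟩

theorem gridFace_inter_below_nontrivial (hi : i + 1 < n) (hc : c + 1 < m) :
    (gridFace n m i c ∩ gridFace n m i (c + 1)).Nontrivial :=
  ⟨(⟨i, by omega⟩, ⟨c + 1, hc⟩), by simp [mem_gridFace],
    (⟨i + 1, hi⟩, ⟨c + 1, hc⟩), by simp [mem_gridFace], by simp⟩

theorem mutuallyReachable_of_forall_adj {A : Fin n × Fin m → Fin n × Fin m → Prop} (hb : b ≤ n)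
    (hk : k ≤ m) (h : ∀ p ∈ gridBlock n m a b k, ∀ q ∈ gridBlock n m a b k,
      (gridGraph n m).Adj p q → MutuallyReachable A p q)
    (hx : x ∈ gridBlock n m a b k) (hy : y ∈ gridBlock n m a b k) : MutuallyReachable A x y := by
  have hk₀ : 0 < k := Nat.zero_lt_of_lt hx.2
  have : NeZero n := ⟨x.1.pos.ne'⟩
  have : NeZero m := ⟨x.2.pos.ne'⟩
  have adj_iff : ∀ p q, p ∈ gridBlock n m a b k ∧ q ∈ gridBlock n m a b k ∧
      (gridGraph n m).Adj p q → (MutuallyReachable A x p ↔ MutuallyReachable A x q) :=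
    fun p q ⟨hp, hq, hpq⟩ => ⟨fun h' => h'.trans (h p hp q hq hpq),
      fun h' => h'.trans (h p hp q hq hpq).symm⟩
  rw [eq_gridVertex (x := y) rfl rfl]
  refine of_grid_steps (P := fun i c => MutuallyReachable A x (gridVertex n m i c))
    (fun i hai hib => adj_iff _ _ ?_) (fun i c hai hib hck => adj_iff _ _ ?_)
    hx.1 hx.2 (by rw [← eq_gridVertex rfl rfl]) hy.1 hy.2
  all_goals
    simp (disch := omega) only [mem_gridBlock, gridGraph_adj, gridVertex_fst, gridVertex_snd,
      true_or, or_true, and_true]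
    omega

/-- An orientation of the quadrant grid `ℕ × ℕ`: `right i c` says that the edge between `(i, c)` and
`(i + 1, c)` is directed towards `(i + 1, c)`, and `down i c` that the edge between `(i, c)` and
`(i, c + 1)` is directed towards `(i, c + 1)`. It restricts to every `P_n □ P_m`. -/
structure GridOrientation where
  right : ℕ → ℕ → Prop
  down : ℕ → ℕ → Prop

namespace GridOrientation

/-- The arc relation of a grid orientation on `P_n □ P_m`. -/
def Arc (O : GridOrientation) (x y : Fin n × Fin m) : Prop :=
  (x.2 : ℕ) = y.2 ∧
      ((x.1 : ℕ) + 1 = y.1 ∧ O.right x.1 x.2 ∨ (y.1 : ℕ) + 1 = x.1 ∧ ¬ O.right y.1 y.2) ∨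
    (x.1 : ℕ) = y.1 ∧
      ((x.2 : ℕ) + 1 = y.2 ∧ O.down x.1 x.2 ∨ (y.2 : ℕ) + 1 = x.2 ∧ ¬ O.down y.1 y.2)

theorem isOrientation_arc (O : GridOrientation) :
    IsOrientation (gridGraph n m) (O.Arc (n := n) (m := m)) := by
  refine ⟨fun x y h => ?_, fun x y h => ?_, fun x y h h' => ?_⟩
  · rw [gridGraph_adj]
    unfold Arc at h
    omega
  · rw [gridGraph_adj] at h
    unfold Arc
    grind
  · unfold Arc at h h'
    grind

/-- The boundary of the unit square between columns `i`, `i + 1` and rows `c`, `c + 1` is a directed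
four-cycle. -/
def IsCyclicFace (O : GridOrientation) (i c : ℕ) : Prop :=
  (O.right i c ∧ O.down (i + 1) c ∧ ¬ O.right i (c + 1) ∧ ¬ O.down i c) ∨
    (¬ O.right i c ∧ ¬ O.down (i + 1) c ∧ O.right i (c + 1) ∧ O.down i c)

variable {O : GridOrientation} {S : Set (Fin n × Fin m)}

theorem IsCyclicFace.exists_isCyclicSquare (h : O.IsCyclicFace i c) (hi : i + 1 < n)
    (hc : c + 1 < m) : ∃ p q r s : Fin n × Fin m,
      IsCyclicSquare O.Arc p q r s ∧ gridFace n m i c = {p, q, r, s} := by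
  refine ⟨(⟨i, by omega⟩, ⟨c, by omega⟩), (⟨i + 1, hi⟩, ⟨c, by omega⟩), (⟨i + 1, hi⟩, ⟨c + 1, hc⟩),
    (⟨i, by omega⟩, ⟨c + 1, hc⟩), ?_, ?_⟩
  · simpa [IsCyclicSquare, Arc, IsCyclicFace, show i + 1 + 1 ≠ i by omega,
      show c + 1 + 1 ≠ c by omega, and_comm, and_left_comm, and_assoc] using h
  · ext x
    simp only [gridFace, Set.mem_ofPred_eq, Set.mem_insert_iff, Set.mem_singleton_iff, Prod.ext_iff,
      Fin.ext_iff]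
    omega

theorem IsCyclicFace.mutuallyReachable (h : O.IsCyclicFace i c) (hi : i + 1 < n)
    (hc : c + 1 < m) (hx : x ∈ gridFace n m i c) (hy : y ∈ gridFace n m i c) :
    MutuallyReachable O.Arc x y := by
  obtain ⟨p, q, r, s, hsq, hface⟩ := h.exists_isCyclicSquare hi hc
  rw [hface] at hx hy
  exact hsq.mutuallyReachable_of_mem hx hy

theorem _root_.DConvex.gridFace_subset (hS : DConvex O.Arc S) (h : O.IsCyclicFace i c)
    (hi : i + 1 < n) (hc : c + 1 < m) (hnt : (S ∩ gridFace n m i c).Nontrivial) :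
    gridFace n m i c ⊆ S := by
  obtain ⟨p, q, r, s, hsq, hface⟩ := h.exists_isCyclicSquare hi hc
  rw [hface] at hnt ⊢
  exact hS.subset_of_isCyclicSquare O.isOrientation_arc gridGraph_cliqueFree_three hsq hnt

theorem _root_.DConvex.gridFace_subset_iff (hS : DConvex O.Arc S) (h : O.IsCyclicFace i c)
    (h' : O.IsCyclicFace i' c') (hi : i + 1 < n) (hc : c + 1 < m) (hi' : i' + 1 < n)
    (hc' : c' + 1 < m) (hnt : (gridFace n m i c ∩ gridFace n m i' c').Nontrivial) :
    gridFace n m i c ⊆ S ↔ gridFace n m i' c' ⊆ S :=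
  ⟨fun hF => hS.gridFace_subset h' hi' hc' (hnt.mono (Set.inter_subset_inter_left _ hF)),
    fun hF => hS.gridFace_subset h hi hc (hnt.mono fun _ hx => ⟨hF hx.2, hx.1⟩)⟩

section Block

variable (hcyc : ∀ i c, a ≤ i → i + 1 < b → c + 1 < k → O.IsCyclicFace i c)
  (hab : a + 2 ≤ b) (hb : b ≤ n) (hk : 2 ≤ k) (hm : k ≤ m)
include hcyc hab hb hk hm

theorem mutuallyReachable_of_mem_gridBlock (hx : x ∈ gridBlock n m a b k)
    (hy : y ∈ gridBlock n m a b k) : MutuallyReachable O.Arc x y := by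
  refine mutuallyReachable_of_forall_adj hb hm (fun p hp q hq hpq => ?_) hx hy
  obtain ⟨i, c, hi, hib, hck, hpf, hqf⟩ := exists_gridFace hp hq hab hk (.inr hpq)
  exact (hcyc i c hi hib hck).mutuallyReachable (by omega) (by omega) hpf hqf

theorem _root_.DConvex.gridBlock_subset (hS : DConvex O.Arc S) (hx : x ∈ gridBlock n m a b k)
    (hy : y ∈ gridBlock n m a b k) (hxy : (gridGraph n m).Adj x y) (hxS : x ∈ S) (hyS : y ∈ S) :
    gridBlock n m a b k ⊆ S := by
  obtain ⟨i, c, hi, hib, hck, hxf, hyf⟩ := exists_gridFace hx hy hab hk (.inr hxy)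
  have start := hS.gridFace_subset (hcyc i c hi hib hck) (by omega) (by omega)
    ⟨x, ⟨hxS, hxf⟩, y, ⟨hyS, hyf⟩, hxy.ne⟩
  intro z hz
  obtain ⟨i', c', hi', hib', hck', hzf, -⟩ := exists_gridFace hz hz hab hk (.inl rfl)
  suffices hface : gridFace n m i' c' ⊆ S from hface hzf
  refine of_grid_steps (P := fun i c => gridFace n m i c ⊆ S) (b := b - 1) (k := k - 1)
    (fun i hai hib => ?_) (fun i c hai hib hck => ?_)
    ⟨hi, by omega⟩ (by omega) start ⟨hi', by omega⟩ (by omega)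
  · exact hS.gridFace_subset_iff (hcyc _ _ (by omega) (by omega) (by omega))
      (hcyc _ _ (by omega) (by omega) (by omega)) (by omega) (by omega) (by omega) (by omega)
      (gridFace_inter_right_nontrivial (by omega) (by omega))
  · exact hS.gridFace_subset_iff (hcyc _ _ (by omega) (by omega) (by omega))
      (hcyc _ _ (by omega) (by omega) (by omega)) (by omega) (by omega) (by omega) (by omega)
      (gridFace_inter_below_nontrivial (by omega) (by omega))

end Block

/-- The orientation used on `P_{j+1} □ P_3`. The unit squares of the first `j` columns are directed
cycles, alternately clockwise and counterclockwise; the last column is attached by the paths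
`(j - 1, c) → (j, c) → (j, 1) → (j - 1, 1)` with `c = 0, 2`, each with the shortcut
`(j - 1, c) → (j - 1, 1)`. -/
def foldedCheckerboard (j : ℕ) : GridOrientation where
  right i c := (i + c + j) % 2 = 0 ↔ i + 1 < j
  down i c := (i + c + j) % 2 = 1 ↔ i < j

section FoldedCheckerboard

theorem foldedCheckerboard_isCyclicFace (hi : i + 1 < j) :
    (foldedCheckerboard j).IsCyclicFace i c := by
  simp only [IsCyclicFace, foldedCheckerboard]
  omega

theorem foldedCheckerboard_arc_iff {x y : Fin (j + 1) × Fin 3}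
    (h : (x.1 : ℕ) = j ∨ (y.1 : ℕ) = j) : (foldedCheckerboard j).Arc x y ↔
      (x.1 : ℕ) + 1 = j ∧ (x.2 : ℕ) ≠ 1 ∧ (y.1 : ℕ) = j ∧ (y.2 : ℕ) = x.2 ∨
      (x.1 : ℕ) = j ∧ (x.2 : ℕ) ≠ 1 ∧ (y.1 : ℕ) = j ∧ (y.2 : ℕ) = 1 ∨
      (x.1 : ℕ) = j ∧ (x.2 : ℕ) = 1 ∧ (y.1 : ℕ) + 1 = j ∧ (y.2 : ℕ) = 1 := by
  simp only [Arc, foldedCheckerboard]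
  rcases h with h | h <;> constructor <;> omega

theorem foldedCheckerboard_arc_middle {x y : Fin (j + 1) × Fin 3} (hx : (x.1 : ℕ) + 1 = j)
    (hx1 : (x.2 : ℕ) ≠ 1) (hy : (y.1 : ℕ) + 1 = j) (hy1 : (y.2 : ℕ) = 1) :
    (foldedCheckerboard j).Arc x y := by
  simp only [Arc, foldedCheckerboard]
  omega

theorem foldedCheckerboard_dConvex_leftColumns (hj : 2 ≤ j) :
    DConvex (foldedCheckerboard j).Arc (leftColumns (j + 1) 3 j) := by
  refine dConvex_of_shortcut ⟨(0, 0), mem_leftColumns.2 (by simp; omega)⟩ ?_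
  intro x hx w hw y hy z hz hxy hzw l _
  simp only [mem_leftColumns] at hx hw hy hz
  rw [foldedCheckerboard_arc_iff (by omega)] at hxy hzw
  exact ⟨1, by omega, hasDirWalk_one.2 (foldedCheckerboard_arc_middle (by omega) (by omega)
    (by omega) (by omega))⟩

theorem foldedCheckerboard_strongConnected (hj : 2 ≤ j) :
    StrongConnected ((foldedCheckerboard j).Arc (n := j + 1) (m := 3)) := by
  have left {x y : Fin (j + 1) × Fin 3} (hx : (x.1 : ℕ) < j) (hy : (y.1 : ℕ) < j) :
      MutuallyReachable (foldedCheckerboard j).Arc x y :=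
    mutuallyReachable_of_mem_gridBlock (fun _ _ _ hi _ => foldedCheckerboard_isCyclicFace hi)
      hj j.le_succ (by omega) le_rfl (mem_leftColumns.2 hx) (mem_leftColumns.2 hy)
  obtain ⟨p, hpj, hp1⟩ := exists_grid_coordinates (j + 1) 3 j 1
  obtain ⟨q, hqj, hq1⟩ := exists_grid_coordinates (j + 1) 3 (j - 1) 1
  have hpq : (foldedCheckerboard j).Arc p q :=
    (foldedCheckerboard_arc_iff (by omega)).2 (by omega)
  have ear (x : Fin (j + 1) × Fin 3) (hxj : (x.1 : ℕ) = j) (hx1 : (x.2 : ℕ) ≠ 1) :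
      MutuallyReachable (foldedCheckerboard j).Arc q x ∧ (foldedCheckerboard j).Arc x p := by
    obtain ⟨u, huj, hux⟩ := exists_grid_coordinates (j + 1) 3 (j - 1) x.2
    have hux : (foldedCheckerboard j).Arc u x :=
      (foldedCheckerboard_arc_iff (by omega)).2 (by omega)
    have hxp : (foldedCheckerboard j).Arc x p :=
      (foldedCheckerboard_arc_iff (by omega)).2 (by omega)
    have huq := left (x := u) (y := q) (by omega) (by omega)
    exact ⟨huq.symm.trans (huq.of_between (.single hux) (.tail (.single hxp) hpq)), hxp⟩
  refine strongConnected_of_mutuallyReachable (u := q) fun x => ?_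
  by_cases hxj : (x.1 : ℕ) < j
  · exact left (by omega) hxj
  by_cases hx1 : (x.2 : ℕ) = 1
  · obtain rfl : x = p := Prod.ext (Fin.ext (by omega)) (Fin.ext (by omega))
    obtain ⟨s, hsj, hs0⟩ := exists_grid_coordinates (j + 1) 3 j 0
    obtain ⟨hqs, hsx⟩ := ear s hsj (by omega)
    exact ⟨hqs.1.tail hsx, .single hpq⟩
  · exact (ear x (by omega) hx1).1

theorem foldedCheckerboard_exists_end_mem (hj : 2 ≤ j) {S : Set (Fin (j + 1) × Fin 3)}
    (hS : DConvex (foldedCheckerboard j).Arc S) (hnt : S.Nontrivial)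
    (hleft : ¬ S ⊆ leftColumns (j + 1) 3 j) : ∃ p ∈ S, (p.1 : ℕ) = j ∧ (p.2 : ℕ) = 1 := by
  obtain ⟨z, hz, hzj⟩ := Set.not_subset.1 hleft
  rw [mem_leftColumns] at hzj
  by_cases hz1 : (z.2 : ℕ) = 1
  · exact ⟨z, hz, by omega, hz1⟩
  · obtain ⟨p, hp, hzp⟩ := hS.exists_arc_from (foldedCheckerboard_strongConnected hj) hnt hz
    rw [foldedCheckerboard_arc_iff (by omega)] at hzp
    exact ⟨p, hp, by omega⟩

theorem foldedCheckerboard_leftColumns_subset (hj : 2 ≤ j) {S : Set (Fin (j + 1) × Fin 3)}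
    (hS : DConvex (foldedCheckerboard j).Arc S) (hnt : S.Nontrivial) {p : Fin (j + 1) × Fin 3}
    (hp : p ∈ S) (hpj : (p.1 : ℕ) = j) (hp1 : (p.2 : ℕ) = 1) : leftColumns (j + 1) 3 j ⊆ S := by
  have hstrong := foldedCheckerboard_strongConnected hj
  obtain ⟨q, hq, hqj, hq1⟩ : ∃ q ∈ S, (q.1 : ℕ) + 1 = j ∧ (q.2 : ℕ) = 1 := by
    obtain ⟨q, hq, hpq⟩ := hS.exists_arc_from hstrong hnt hp
    rw [foldedCheckerboard_arc_iff (by omega)] at hpq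
    exact ⟨q, hq, by omega⟩
  obtain ⟨s, hs, hsj, hs1⟩ : ∃ s ∈ S, (s.1 : ℕ) = j ∧ (s.2 : ℕ) ≠ 1 := by
    obtain ⟨s, hs, hsp⟩ := hS.exists_arc_to hstrong hnt hp
    rw [foldedCheckerboard_arc_iff (by omega)] at hsp
    exact ⟨s, hs, by omega⟩
  obtain ⟨t, ht, htj, ht1⟩ : ∃ t ∈ S, (t.1 : ℕ) + 1 = j ∧ (t.2 : ℕ) ≠ 1 := by
    obtain ⟨t, ht, hts⟩ := hS.exists_arc_to hstrong hnt hs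
    rw [foldedCheckerboard_arc_iff (by omega)] at hts
    exact ⟨t, ht, by omega⟩
  exact hS.gridBlock_subset (fun _ _ _ hi _ => foldedCheckerboard_isCyclicFace hi)
    hj j.le_succ (by omega) le_rfl (mem_leftColumns.2 (by omega)) (mem_leftColumns.2 (by omega))
    (gridGraph_adj.2 (by omega)) ht hq

theorem foldedCheckerboard_eq_univ (hj : 2 ≤ j) {S : Set (Fin (j + 1) × Fin 3)}
    (hS : DConvex (foldedCheckerboard j).Arc S) (hnt : S.Nontrivial)
    (hleft : ¬ S ⊆ leftColumns (j + 1) 3 j) : S = Set.univ := by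
  obtain ⟨p, hp, hpj, hp1⟩ := foldedCheckerboard_exists_end_mem hj hS hnt hleft
  have hleft := foldedCheckerboard_leftColumns_subset hj hS hnt hp hpj hp1
  refine Set.eq_univ_of_forall fun x => ?_
  by_cases hxj : (x.1 : ℕ) < j
  · exact hleft (mem_leftColumns.2 hxj)
  by_cases hx1 : (x.2 : ℕ) = 1
  · obtain rfl : x = p := Prod.ext (Fin.ext (by omega)) (Fin.ext (by omega))
    exact hp
  obtain ⟨w, hwj, hwx⟩ := exists_grid_coordinates (j + 1) 3 (j - 1) x.2
  have hw : w ∈ S := hleft (mem_leftColumns.2 (by omega))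
  have hwx : (foldedCheckerboard j).Arc w x := (foldedCheckerboard_arc_iff (by omega)).2 (by omega)
  have hxp : (foldedCheckerboard j).Arc x p := (foldedCheckerboard_arc_iff (by omega)).2 (by omega)
  exact hS.mem_of_arc_of_arc (isOrientation_arc _) gridGraph_cliqueFree_three hwx hxp hw hp

end FoldedCheckerboard

/-- The orientation used on `P_n □ P_3` for `j + 2 ≤ n`. From column `j` on all unit squares are
directed cycles. Among the first `j` columns, the columns `i` with `i + j` odd are directed down and
the others up; arcs in row `0` point to the odd ones and arcs in rows `1` and `2` to the even ones.
Thus the first `j` columns are entered only in row `0` and left only in rows `1` and `2`. -/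
def zigzagCheckerboard (j : ℕ) : GridOrientation where
  right i c := i < j ∧ ((i + j) % 2 = 0 ↔ c = 0) ∨ j ≤ i ∧ (i + c + j) % 2 = 1
  down i c := i < j ∧ (i + j) % 2 = 1 ∨ j ≤ i ∧ (i + c + j) % 2 = 0

section ZigzagCheckerboard

variable {x y : Fin n × Fin 3}

theorem zigzagCheckerboard_isCyclicFace_top (hi : i + 1 < j) (hc : c = 0) :
    (zigzagCheckerboard j).IsCyclicFace i c := by
  simp only [IsCyclicFace, zigzagCheckerboard]
  omega

theorem zigzagCheckerboard_isCyclicFace (hi : j ≤ i) :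
    (zigzagCheckerboard j).IsCyclicFace i c := by
  simp only [IsCyclicFace, zigzagCheckerboard]
  omega

theorem zigzagCheckerboard_arc_down (hx : (x.1 : ℕ) < j) (hodd : ((x.1 : ℕ) + j) % 2 = 1)
    (hxy : (x.1 : ℕ) = y.1) (h : (x.2 : ℕ) + 1 = y.2) : (zigzagCheckerboard j).Arc x y := by
  simp only [Arc, zigzagCheckerboard]
  omega

theorem zigzagCheckerboard_arc_up (hx : (x.1 : ℕ) < j) (heven : ((x.1 : ℕ) + j) % 2 = 0)
    (hxy : (x.1 : ℕ) = y.1) (h : (y.2 : ℕ) + 1 = x.2) : (zigzagCheckerboard j).Arc x y := by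
  simp only [Arc, zigzagCheckerboard]
  omega

theorem zigzagCheckerboard_arc_top (heven : ((x.1 : ℕ) + j) % 2 = 0) (hy : (y.1 : ℕ) < j)
    (hxy : (x.1 : ℕ) + 1 = y.1 ∨ (y.1 : ℕ) + 1 = x.1) (hx0 : (x.2 : ℕ) = 0)
    (hy0 : (y.2 : ℕ) = 0) : (zigzagCheckerboard j).Arc x y := by
  simp only [Arc, zigzagCheckerboard]
  omega

theorem zigzagCheckerboard_arc_row (hodd : ((x.1 : ℕ) + j) % 2 = 1) (hx : (x.1 : ℕ) < j)
    (hxy : (x.1 : ℕ) + 1 = y.1 ∨ (y.1 : ℕ) + 1 = x.1) (hx0 : (x.2 : ℕ) ≠ 0)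
    (h : (x.2 : ℕ) = y.2) : (zigzagCheckerboard j).Arc x y := by
  simp only [Arc, zigzagCheckerboard]
  omega

theorem zigzagCheckerboard_arc_exit (hxy : (zigzagCheckerboard j).Arc x y) (hx : (x.1 : ℕ) < j)
    (hy : j ≤ (y.1 : ℕ)) :
    (x.1 : ℕ) + 1 = j ∧ (y.1 : ℕ) = j ∧ (x.2 : ℕ) ≠ 0 ∧ (x.2 : ℕ) = y.2 := by
  simp only [Arc, zigzagCheckerboard] at hxy
  omega

theorem zigzagCheckerboard_arc_entry (hxy : (zigzagCheckerboard j).Arc x y) (hx : j ≤ (x.1 : ℕ))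
    (hy : (y.1 : ℕ) < j) :
    (x.1 : ℕ) = j ∧ (y.1 : ℕ) + 1 = j ∧ (x.2 : ℕ) = 0 ∧ (y.2 : ℕ) = 0 := by
  simp only [Arc, zigzagCheckerboard] at hxy
  omega

theorem zigzagCheckerboard_arc_to_top (hxy : (zigzagCheckerboard j).Arc x y)
    (hy : (y.1 : ℕ) = j) (hy0 : (y.2 : ℕ) = 0) : (x.1 : ℕ) = j + 1 ∧ (x.2 : ℕ) = 0 := by
  simp only [Arc, zigzagCheckerboard] at hxy
  omega

theorem zigzagCheckerboard_not_arc_from_middle (hx : (x.1 : ℕ) = j) (hx1 : (x.2 : ℕ) = 1)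
    (hy : (y.1 : ℕ) = j) : ¬ (zigzagCheckerboard j).Arc x y := by
  simp only [Arc, zigzagCheckerboard]
  omega

theorem zigzagCheckerboard_not_hasDirWalk_top {l : ℕ} (hl : l < 3) (hx : (x.1 : ℕ) = j)
    (hx0 : (x.2 : ℕ) ≠ 0) (hy : (y.1 : ℕ) = j) (hy0 : (y.2 : ℕ) = 0) :
    ¬ HasDirWalk (zigzagCheckerboard j).Arc l x y := by
  interval_cases l
  · rw [hasDirWalk_zero]
    rintro rfl
    exact hx0 hy0
  · rw [hasDirWalk_one]
    intro hxy
    have := zigzagCheckerboard_arc_to_top hxy hy hy0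
    omega
  · rw [hasDirWalk_succ]
    rintro ⟨v, hxv, hvy⟩
    have := zigzagCheckerboard_arc_to_top (hasDirWalk_one.1 hvy) hy hy0
    have := gridGraph_adj.1 ((isOrientation_arc _).1 _ _ hxv)
    omega

theorem zigzagCheckerboard_exists_hasDirWalk_le_four (hj : 2 ≤ j) (hn : j < n)
    (hx : (x.1 : ℕ) + 1 = j) (hx0 : (x.2 : ℕ) ≠ 0) (hy : (y.1 : ℕ) + 1 = j) (hy0 : (y.2 : ℕ) = 0) :
    ∃ l ≤ 4, HasDirWalk (zigzagCheckerboard j).Arc l x y := by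
  obtain ⟨p, hp, hp0⟩ := exists_grid_coordinates n 3 (j - 2) 0
  obtain ⟨q, hq, hq1⟩ := exists_grid_coordinates n 3 (j - 2) 1
  have hpy : (zigzagCheckerboard j).Arc p y :=
    zigzagCheckerboard_arc_top (by omega) (by omega) (by omega) hp0 hy0
  have hqp : (zigzagCheckerboard j).Arc q p :=
    zigzagCheckerboard_arc_up (by omega) (by omega) (by omega) (by omega)
  have hqy : HasDirWalk (zigzagCheckerboard j).Arc 2 q y := .cons hqp (hasDirWalk_one.2 hpy)
  by_cases hx1 : (x.2 : ℕ) = 1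
  · have hxq : (zigzagCheckerboard j).Arc x q :=
      zigzagCheckerboard_arc_row (by omega) (by omega) (by omega) hx0 (by omega)
    exact ⟨3, by omega, hqy.cons hxq⟩
  · obtain ⟨r, hr, hr2⟩ := exists_grid_coordinates n 3 (j - 2) 2
    have hxr : (zigzagCheckerboard j).Arc x r :=
      zigzagCheckerboard_arc_row (by omega) (by omega) (by omega) hx0 (by omega)
    have hrq : (zigzagCheckerboard j).Arc r q :=
      zigzagCheckerboard_arc_up (by omega) (by omega) (by omega) (by omega)
    exact ⟨4, le_rfl, (hqy.cons hrq).cons hxr⟩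

theorem zigzagCheckerboard_dConvex_leftColumns (hj : 2 ≤ j) (hn : j < n) :
    DConvex (zigzagCheckerboard j).Arc (leftColumns n 3 j) := by
  refine dConvex_of_shortcut ⟨(⟨0, by omega⟩, 0), mem_leftColumns.2 (by simp; omega)⟩ ?_
  intro x hx w hw y hy z hz hxy hzw l hyz
  simp only [mem_leftColumns, not_lt] at hx hw hy hz
  have hexit := zigzagCheckerboard_arc_exit hxy hx hy
  have hentry := zigzagCheckerboard_arc_entry hzw hz hw
  have hl : 3 ≤ l := not_lt.1 fun hl =>
    zigzagCheckerboard_not_hasDirWalk_top hl (by omega) (by omega) (by omega) (by omega) hyz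
  obtain ⟨k, hk, hxw⟩ := zigzagCheckerboard_exists_hasDirWalk_le_four (x := x) (y := w) hj hn
    (by omega) (by omega) (by omega) (by omega)
  exact ⟨k, by omega, hxw⟩

theorem zigzagCheckerboard_mutuallyReachable_upper (hj : 2 ≤ j) (hn : j < n)
    (hx : (x.1 : ℕ) < j) (hx2 : (x.2 : ℕ) < 2) (hy : (y.1 : ℕ) < j) (hy2 : (y.2 : ℕ) < 2) :
    MutuallyReachable (zigzagCheckerboard j).Arc x y :=
  mutuallyReachable_of_mem_gridBlock (a := 0) (b := j) (k := 2)
    (fun _ _ _ hi hc => zigzagCheckerboard_isCyclicFace_top hi (by omega))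
    (by omega) hn.le le_rfl (by omega) (mem_gridBlock.2 (by omega)) (mem_gridBlock.2 (by omega))

theorem zigzagCheckerboard_mutuallyReachable_right (hn : j + 2 ≤ n) (hx : j ≤ (x.1 : ℕ))
    (hy : j ≤ (y.1 : ℕ)) : MutuallyReachable (zigzagCheckerboard j).Arc x y :=
  mutuallyReachable_of_mem_gridBlock (a := j) (b := n) (k := 3)
    (fun _ _ hi _ _ => zigzagCheckerboard_isCyclicFace hi)
    hn le_rfl (by omega) le_rfl ⟨⟨hx, x.1.2⟩, x.2.2⟩ ⟨⟨hy, y.1.2⟩, y.2.2⟩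

theorem zigzagCheckerboard_exists_between (hj : 2 ≤ j) (hn : j < n) (hx : (x.1 : ℕ) < j)
    (hx2 : (x.2 : ℕ) = 2) : ∃ p q : Fin n × Fin 3,
      ((p.1 : ℕ) < j ∧ (p.2 : ℕ) = 1) ∧ ((q.1 : ℕ) < j ∧ (q.2 : ℕ) = 1) ∧
        Relation.ReflTransGen (zigzagCheckerboard j).Arc p x ∧
        Relation.ReflTransGen (zigzagCheckerboard j).Arc x q := by
  obtain ⟨i, hij, hi⟩ : ∃ i < j, (x.1 : ℕ) + 1 = i ∨ i + 1 = (x.1 : ℕ) := by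
    by_cases h : (x.1 : ℕ) = 0
    · exact ⟨1, by omega, by omega⟩
    · exact ⟨x.1 - 1, by omega, by omega⟩
  obtain ⟨p, hpi, hp1⟩ := exists_grid_coordinates n 3 x.1 1
  obtain ⟨y, hyi, hy2⟩ := exists_grid_coordinates n 3 i 2
  obtain ⟨q, hqi, hq1⟩ := exists_grid_coordinates n 3 i 1
  rcases Nat.mod_two_eq_zero_or_one ((x.1 : ℕ) + j) with heven | hodd
  · have hqy : (zigzagCheckerboard j).Arc q y :=
      zigzagCheckerboard_arc_down (by omega) (by omega) (by omega) (by omega)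
    have hyx : (zigzagCheckerboard j).Arc y x :=
      zigzagCheckerboard_arc_row (by omega) (by omega) (by omega) (by omega) (by omega)
    have hxp : (zigzagCheckerboard j).Arc x p :=
      zigzagCheckerboard_arc_up hx heven (by omega) (by omega)
    exact ⟨q, p, by omega, by omega, .tail (.single hqy) hyx, .single hxp⟩
  · have hpx : (zigzagCheckerboard j).Arc p x :=
      zigzagCheckerboard_arc_down (by omega) (by omega) (by omega) (by omega)
    have hxy : (zigzagCheckerboard j).Arc x y :=
      zigzagCheckerboard_arc_row hodd hx (by omega) (by omega) (by omega)
    have hyq : (zigzagCheckerboard j).Arc y q :=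
      zigzagCheckerboard_arc_up (by omega) (by omega) (by omega) (by omega)
    exact ⟨p, q, by omega, by omega, .single hpx, .tail (.single hxy) hyq⟩

theorem zigzagCheckerboard_mutuallyReachable_left (hj : 2 ≤ j) (hn : j < n)
    (hx : (x.1 : ℕ) < j) (hx2 : (x.2 : ℕ) < 2) (hy : (y.1 : ℕ) < j) :
    MutuallyReachable (zigzagCheckerboard j).Arc x y := by
  by_cases hy2 : (y.2 : ℕ) < 2
  · exact zigzagCheckerboard_mutuallyReachable_upper hj hn hx hx2 hy hy2
  obtain ⟨p, q, hp, hq, hpy, hyq⟩ := zigzagCheckerboard_exists_between hj hn hy (by omega)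
  have hxp := zigzagCheckerboard_mutuallyReachable_upper hj hn hx hx2 hp.1 (by omega)
  have hxq := zigzagCheckerboard_mutuallyReachable_upper hj hn hx hx2 hq.1 (by omega)
  exact hxq.of_between (hxp.1.trans hpy) hyq

theorem zigzagCheckerboard_strongConnected (hj : 2 ≤ j) (hn : j + 2 ≤ n) :
    StrongConnected ((zigzagCheckerboard j).Arc (n := n) (m := 3)) := by
  obtain ⟨p, hpj, hp1⟩ := exists_grid_coordinates n 3 (j - 1) 1
  obtain ⟨q, hqj, hq1⟩ := exists_grid_coordinates n 3 j 1
  obtain ⟨r, hrj, hr0⟩ := exists_grid_coordinates n 3 j 0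
  obtain ⟨s, hsj, hs0⟩ := exists_grid_coordinates n 3 (j - 1) 0
  have hpq : (zigzagCheckerboard j).Arc p q :=
    zigzagCheckerboard_arc_row (by omega) (by omega) (by omega) (by omega) (by omega)
  have hrs : (zigzagCheckerboard j).Arc r s :=
    zigzagCheckerboard_arc_top (by omega) (by omega) (by omega) hr0 hs0
  have left {x : Fin n × Fin 3} (hx : (x.1 : ℕ) < j) :
      MutuallyReachable (zigzagCheckerboard j).Arc p x :=
    zigzagCheckerboard_mutuallyReachable_left hj (by omega) (by omega) (by omega) hx
  have right {x : Fin n × Fin 3} (hx : j ≤ (x.1 : ℕ)) :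
      MutuallyReachable (zigzagCheckerboard j).Arc q x :=
    zigzagCheckerboard_mutuallyReachable_right hn hqj.ge hx
  have hpq' : MutuallyReachable (zigzagCheckerboard j).Arc p q :=
    (left (x := s) (by omega)).of_between (.single hpq) ((right hrj.ge).1.tail hrs)
  refine strongConnected_of_mutuallyReachable (u := p) fun x => ?_
  rcases lt_or_ge (x.1 : ℕ) j with hx | hx
  exacts [left hx, hpq'.trans (right hx)]

theorem zigzagCheckerboard_right_subset (hj : 2 ≤ j) (hn : j + 2 ≤ n) {S : Set (Fin n × Fin 3)}
    (hS : DConvex (zigzagCheckerboard j).Arc S) (hnt : S.Nontrivial)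
    (hleft : ¬ S ⊆ leftColumns n 3 j) : gridBlock n 3 j n 3 ⊆ S := by
  have hstrong := zigzagCheckerboard_strongConnected hj hn
  obtain ⟨z, hz, hzj⟩ := Set.not_subset.1 hleft
  rw [mem_leftColumns, not_lt] at hzj
  obtain ⟨w, hw, hwj, hzw⟩ : ∃ w ∈ S, j ≤ (w.1 : ℕ) ∧ (gridGraph n 3).Adj z w := by
    obtain ⟨w, hw, hzw⟩ := hS.exists_arc_from hstrong hnt hz
    by_cases hwj : j ≤ (w.1 : ℕ)
    · exact ⟨w, hw, hwj, (isOrientation_arc _).1 _ _ hzw⟩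
    obtain ⟨hzj, -, hz0, -⟩ := zigzagCheckerboard_arc_entry hzw hzj (not_le.1 hwj)
    obtain ⟨v, hv, hvz⟩ := hS.exists_arc_to hstrong hnt hz
    obtain ⟨hvj, -⟩ := zigzagCheckerboard_arc_to_top hvz hzj hz0
    exact ⟨v, hv, by omega, ((isOrientation_arc _).1 _ _ hvz).symm⟩
  exact hS.gridBlock_subset (fun _ _ hi _ _ => zigzagCheckerboard_isCyclicFace hi)
    hn le_rfl (by omega) le_rfl ⟨⟨hzj, z.1.2⟩, z.2.2⟩ ⟨⟨hwj, w.1.2⟩, w.2.2⟩ hzw hz hw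

theorem zigzagCheckerboard_not_hasDirWalk_top_bottom {l : ℕ} (hl : l < 4) (hx : (x.1 : ℕ) = j)
    (hx0 : (x.2 : ℕ) = 0) (hy : (y.1 : ℕ) = j) (hy2 : (y.2 : ℕ) = 2) :
    ¬ HasDirWalk (zigzagCheckerboard j).Arc l x y := by
  have adj {u v : Fin n × Fin 3} (h : (zigzagCheckerboard j).Arc u v) :=
    gridGraph_adj.1 ((isOrientation_arc _).1 u v h)
  interval_cases l
  · rw [hasDirWalk_zero]
    rintro rfl
    omega
  · rw [hasDirWalk_one]
    intro hxy
    have := adj hxy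
    omega
  · rw [hasDirWalk_succ]
    rintro ⟨v, hxv, hvy⟩
    rw [hasDirWalk_one] at hvy
    have := adj hxv
    have := adj hvy
    exact zigzagCheckerboard_not_arc_from_middle (by omega) (by omega) hy hvy
  · rw [hasDirWalk_succ]
    rintro ⟨v, hxv, hvy⟩
    obtain ⟨w, hvw, hwy⟩ := hasDirWalk_succ.1 hvy
    have := adj hxv
    have := adj hvw
    have := adj (hasDirWalk_one.1 hwy)
    omega

theorem zigzagCheckerboard_upper_subset (hj : 2 ≤ j) (hn : j < n) {S : Set (Fin n × Fin 3)}
    (hS : DConvex (zigzagCheckerboard j).Arc S) (hright : gridBlock n 3 j n 3 ⊆ S) :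
    gridBlock n 3 0 j 2 ⊆ S := by
  obtain ⟨u, huj, hu0⟩ := exists_grid_coordinates n 3 j 0
  obtain ⟨p, hpj, hp0⟩ := exists_grid_coordinates n 3 (j - 1) 0
  obtain ⟨q, hqj, hq1⟩ := exists_grid_coordinates n 3 (j - 1) 1
  obtain ⟨r, hrj, hr2⟩ := exists_grid_coordinates n 3 (j - 1) 2
  obtain ⟨v, hvj, hv2⟩ := exists_grid_coordinates n 3 j 2
  have hup : HasDirWalk (zigzagCheckerboard j).Arc 1 u p := hasDirWalk_one.2
    (zigzagCheckerboard_arc_top (by omega) (by omega) (by omega) hu0 hp0)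
  have hpq : HasDirWalk (zigzagCheckerboard j).Arc 1 p q := hasDirWalk_one.2
    (zigzagCheckerboard_arc_down (by omega) (by omega) (by omega) (by omega))
  have hqr : HasDirWalk (zigzagCheckerboard j).Arc 1 q r := hasDirWalk_one.2
    (zigzagCheckerboard_arc_down (by omega) (by omega) (by omega) (by omega))
  have hrv : HasDirWalk (zigzagCheckerboard j).Arc 1 r v := hasDirWalk_one.2
    (zigzagCheckerboard_arc_row (by omega) (by omega) (by omega) (by omega) (by omega))
  have hu : u ∈ S := hright (mem_gridBlock.2 (by omega))
  have hv : v ∈ S := hright (mem_gridBlock.2 (by omega))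
  have hmin : ∀ l < 4, ¬ HasDirWalk (zigzagCheckerboard j).Arc l u v := fun l hl =>
    zigzagCheckerboard_not_hasDirWalk_top_bottom hl huj hu0 hvj hv2
  have hp : p ∈ S :=
    hS.mem_of_forall_not_hasDirWalk hu hv hup (hpq.append (hqr.append hrv)) hmin
  have hq : q ∈ S :=
    hS.mem_of_forall_not_hasDirWalk hu hv (hup.append hpq) (hqr.append hrv) hmin
  exact hS.gridBlock_subset (fun _ _ _ hi hc => zigzagCheckerboard_isCyclicFace_top hi (by omega))
    (by omega) hn.le le_rfl (by omega) (mem_gridBlock.2 (by omega)) (mem_gridBlock.2 (by omega))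
    (gridGraph_adj.2 (by omega)) hp hq

theorem zigzagCheckerboard_bottom_mem {S : Set (Fin n × Fin 3)}
    (hS : DConvex (zigzagCheckerboard j).Arc S) (hn : j < n) (hright : gridBlock n 3 j n 3 ⊆ S)
    (hupper : gridBlock n 3 0 j 2 ⊆ S) (hx : (x.1 : ℕ) ≤ j) (hx2 : (x.2 : ℕ) = 2) : x ∈ S := by
  obtain ⟨d, hd⟩ : ∃ d, (x.1 : ℕ) + d = j := ⟨_, Nat.add_sub_cancel' hx⟩
  induction d generalizing x with
  | zero => exact hright (mem_gridBlock.2 (by omega))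
  | succ d ih =>
    obtain ⟨p, hpi, hp1⟩ := exists_grid_coordinates n 3 x.1 1
    obtain ⟨y, hyi, hy2⟩ := exists_grid_coordinates n 3 (x.1 + 1) 2
    have hp : p ∈ S := hupper (mem_gridBlock.2 (by omega))
    have hy : y ∈ S := ih (by omega) hy2 (by omega)
    have mem {u v : Fin n × Fin 3} (hux : (zigzagCheckerboard j).Arc u x)
        (hxv : (zigzagCheckerboard j).Arc x v) (hu : u ∈ S) (hv : v ∈ S) : x ∈ S :=
      hS.mem_of_arc_of_arc (isOrientation_arc _) gridGraph_cliqueFree_three hux hxv hu hv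
    rcases Nat.mod_two_eq_zero_or_one ((x.1 : ℕ) + j) with heven | hodd
    · have hyx : (zigzagCheckerboard j).Arc y x :=
        zigzagCheckerboard_arc_row (by omega) (by omega) (by omega) (by omega) (by omega)
      have hxp : (zigzagCheckerboard j).Arc x p :=
        zigzagCheckerboard_arc_up (by omega) heven (by omega) (by omega)
      exact mem hyx hxp hy hp
    · have hpx : (zigzagCheckerboard j).Arc p x :=
        zigzagCheckerboard_arc_down (by omega) (by omega) (by omega) (by omega)
      have hxy : (zigzagCheckerboard j).Arc x y :=
        zigzagCheckerboard_arc_row hodd (by omega) (by omega) (by omega) (by omega)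
      exact mem hpx hxy hp hy

theorem zigzagCheckerboard_eq_univ (hj : 2 ≤ j) (hn : j + 2 ≤ n) {S : Set (Fin n × Fin 3)}
    (hS : DConvex (zigzagCheckerboard j).Arc S) (hnt : S.Nontrivial)
    (hleft : ¬ S ⊆ leftColumns n 3 j) : S = Set.univ := by
  have hright := zigzagCheckerboard_right_subset hj hn hS hnt hleft
  have hupper := zigzagCheckerboard_upper_subset hj (by omega) hS hright
  refine Set.eq_univ_of_forall fun x => ?_
  by_cases hx : j ≤ (x.1 : ℕ)
  · exact hright ⟨⟨hx, x.1.2⟩, x.2.2⟩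
  by_cases hx2 : (x.2 : ℕ) < 2
  · exact hupper (mem_gridBlock.2 (by omega))
  · exact zigzagCheckerboard_bottom_mem hS (by omega) hright hupper (by omega) (by omega)

end ZigzagCheckerboard

end GridOrientation

end Grid

/-- Realizable values `3j` in the strong convexity spectrum of `P_n □ P_3`. -/
theorem three_j_mem_strongConvexitySpectrum_grid_n3 (n : ℕ) (hn : 2 ≤ n)
    (j : ℕ) (hjl : 2 ≤ j) (hju : j ≤ n - 1) :
    3 * j ∈ strongConvexitySpectrum (gridGraph n 3) := by
  rcases eq_or_lt_of_le (show j + 1 ≤ n by omega) with rfl | hjn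
  · exact mul_mem_strongConvexitySpectrum_gridGraph (GridOrientation.isOrientation_arc _)
      (GridOrientation.foldedCheckerboard_strongConnected hjl) three_pos j.lt_succ_self
      (GridOrientation.foldedCheckerboard_dConvex_leftColumns hjl)
      fun _ => GridOrientation.foldedCheckerboard_eq_univ hjl
  · exact mul_mem_strongConvexitySpectrum_gridGraph (GridOrientation.isOrientation_arc _)
      (GridOrientation.zigzagCheckerboard_strongConnected hjl hjn) three_pos (by omega)
      (GridOrientation.zigzagCheckerboard_dConvex_leftColumns hjl (by omega))
      fun _ => GridOrientation.zigzagCheckerboard_eq_univ hjl hjn
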